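/- arXiv:1602.05295 — 2 statements merged into one kernel-verified Lean document; each statement's English description precedes it below -/
import Mathlib

section
/- In the semidirect product G = D_{2n} ⋊_φ Z_2 with φ(1) = (t, −1) ∈ Z_n ⋊ (Z_n)^* and t odd, the element (a^{(t+1)/2} b, 1) has order 2n, and G is isomorphic to the dihedral group D_{4n} of order 4n. -/
open DihedralGroup Multiplicative

/-- The automorphism `(t, -1)` of the dihedral group: `a^i ↦ a^{-i}`,
`a^i b ↦ a^{-i + t} b`; in Mathlib's presentation (`r i = aⁱ`, `sr j = b * aʲ`)
this reads `r i ↦ r (-i)`, `sr j ↦ sr (-j - t)`. -/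
def dihedralReflAut (n : ℕ) (t : ZMod n) : MulAut (DihedralGroup n) where
  toFun g := match g with
    | .r i => .r (-i)
    | .sr j => .sr (-j - t)
  invFun g := match g with
    | .r i => .r (-i)
    | .sr j => .sr (-j - t)
  left_inv g := by cases g <;> (simp only []; congr 1; ring)
  right_inv g := by cases g <;> (simp only []; congr 1; ring)
  map_mul' a b := by
    cases a <;> cases b <;>
      simp only [r_mul_r, r_mul_sr, sr_mul_r, sr_mul_sr] <;> (congr 1; ring)

theorem dihedral_equiv_aux {G : Type*} [Group G] [Finite G] (m : ℕ) [NeZero m] (x y : G)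
    (hx : orderOf x = m) (hy : y * y = 1) (hxy : y * x = x⁻¹ * y)
    (hne : ∀ k : ℕ, x ^ k ≠ y) (hcard : Nat.card G = 2 * m) :
    Nonempty (G ≃* DihedralGroup m) := by
  have hE : ∀ k : ℤ, x ^ ((k : ZMod m).val) = x ^ k := by
    intro k
    rw [← zpow_natCast, ZMod.val_intCast, ← hx, zpow_mod_orderOf]
  have hc : ∀ k : ℤ, y * x ^ k = x ^ (-k) * y := by
    intro k
    have h : SemiconjBy y x x⁻¹ := hxy
    have h2 := h.zpow_right k
    rw [zpow_neg, ← inv_zpow]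
    exact h2
  let f : DihedralGroup m →* G := MonoidHom.mk' (fun g => match g with
    | .r i => x ^ i.val
    | .sr i => y * x ^ i.val) (by
      intro a b
      rcases a with i | i <;> rcases b with j | j <;>
        obtain ⟨i, rfl⟩ := ZMod.intCast_surjective i <;>
        obtain ⟨j, rfl⟩ := ZMod.intCast_surjective j <;>
        simp only [r_mul_r, r_mul_sr, sr_mul_r, sr_mul_sr, ← Int.cast_add, ← Int.cast_sub, hE]
      · rw [zpow_add]
      · rw [hc j, ← mul_assoc, ← zpow_add, hc]
        congr 2; ring
      · rw [zpow_add, mul_assoc]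
      · rw [hc i, mul_assoc, ← mul_assoc y y, hy, one_mul, ← zpow_add]
        congr 1; ring)
  have hinj : Function.Injective f := by
    rw [injective_iff_map_eq_one]
    rintro (i | i) h
    · have h' : x ^ i.val = 1 := h
      rw [← orderOf_dvd_iff_pow_eq_one, hx] at h'
      have h0 := Nat.eq_zero_of_dvd_of_lt h' (ZMod.val_lt i)
      rw [ZMod.val_eq_zero] at h0
      rw [h0, r_zero]
    · have h' : y * x ^ i.val = 1 := h
      refine absurd ?_ (hne i.val)
      rw [← mul_right_inj y, h', hy]
  have hb : Function.Bijective f :=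
    (Nat.bijective_iff_injective_and_card f).2 ⟨hinj, by rw [hcard, nat_card]⟩
  exact ⟨(MulEquiv.ofBijective f hb).symm⟩

/-- In `G = D_{2n} ⋊_φ Z_2` where `φ(1)` is the automorphism `(t, -1)` with
`t = 2u + 1` odd, the element `(a^{(t+1)/2} b, 1)` has order `2n`, and `G` is
isomorphic to the dihedral group `D_{4n}` of order `4n`. -/
theorem dihedral_extension_odd_t_is_dihedral
    (n : ℕ) (hn : 2 ≤ n) (u : ZMod n)
    (φ : Multiplicative (ZMod 2) →* MulAut (DihedralGroup n))
    (hφ : φ (ofAdd 1) = dihedralReflAut n (2 * u + 1)) :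
    orderOf (⟨sr (-(u + 1)), ofAdd 1⟩ : DihedralGroup n ⋊[φ] Multiplicative (ZMod 2)) = 2 * n ∧
    Nonempty ((DihedralGroup n ⋊[φ] Multiplicative (ZMod 2)) ≃* DihedralGroup (2 * n)) := by
  have : NeZero n := ⟨by omega⟩
  have : NeZero (2 * n) := ⟨by omega⟩
  have : Finite (DihedralGroup n ⋊[φ] Multiplicative (ZMod 2)) :=
    Finite.of_equiv _ SemidirectProduct.equivProd.symm
  have hone : (ofAdd (1 : ZMod 2)) * ofAdd 1 = 1 := by decide
  set x : DihedralGroup n ⋊[φ] Multiplicative (ZMod 2) := ⟨sr (-(u + 1)), ofAdd 1⟩ with hxdef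
  have hsr : ∀ j : ZMod n, dihedralReflAut n (2 * u + 1) (sr j) = sr (-j - (2 * u + 1)) :=
    fun _ => rfl
  have hr : ∀ j : ZMod n, dihedralReflAut n (2 * u + 1) (r j) = r (-j) := fun _ => rfl
  have hx2 : x ^ 2 = SemidirectProduct.inl (r 1) := by
    rw [pow_two]
    ext
    · rw [SemidirectProduct.mul_left]
      simp only [hxdef, hφ, hsr, sr_mul_sr, SemidirectProduct.left_inl]
      congr 1; ring
    · rw [SemidirectProduct.mul_right]
      simp only [hxdef, hone, SemidirectProduct.right_inl]
  have heven : ∀ k : ℕ, x ^ (2 * k) = SemidirectProduct.inl (r (k : ZMod n)) := by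
    intro k
    rw [pow_mul, hx2, ← map_pow, r_one_pow]
  have hodd : ∀ k : ℕ, (x ^ (2 * k + 1)).right = ofAdd 1 := by
    intro k
    rw [pow_succ, heven, SemidirectProduct.mul_right, SemidirectProduct.right_inl, one_mul]
  have hne1 : (ofAdd (1 : ZMod 2)) ≠ 1 := by decide
  have hord : orderOf x = 2 * n := by
    apply Nat.dvd_antisymm
    · rw [orderOf_dvd_iff_pow_eq_one, heven, ZMod.natCast_self, r_zero, map_one]
    · have h := pow_orderOf_eq_one x
      rcases Nat.even_or_odd' (orderOf x) with ⟨k, hk | hk⟩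
      · rw [hk, heven] at h
        have h2 : (r (k : ZMod n)) = 1 := by
          simpa using congrArg SemidirectProduct.left h
        rw [one_def, r.injEq, ZMod.natCast_eq_zero_iff] at h2
        rw [hk]
        exact Nat.mul_dvd_mul_left 2 h2
      · rw [hk] at h
        refine absurd ?_ hne1
        rw [← hodd k, h, SemidirectProduct.one_right]
  refine ⟨hord, dihedral_equiv_aux (2 * n) x (SemidirectProduct.inl (sr 0)) hord ?_ ?_ ?_ ?_⟩
  · rw [← map_mul, sr_mul_self, map_one]
  · have h1 : (SemidirectProduct.inl (sr 0) * x) * (SemidirectProduct.inl (sr 0) * x) = 1 := by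
      have h2 : SemidirectProduct.inl (sr 0) * x = ⟨r (-(u + 1)), ofAdd 1⟩ := by
        ext
        · simp [hxdef]
        · simp [hxdef]
      rw [h2]
      ext
      · rw [SemidirectProduct.mul_left]
        simp only [hφ, hr, r_mul_r, SemidirectProduct.one_left, one_def]
        congr 1; ring
      · rw [SemidirectProduct.mul_right]
        simp only [hone, SemidirectProduct.one_right]
    have h3 := eq_inv_of_mul_eq_one_left h1
    rw [h3, mul_inv_rev, ← map_inv, inv_sr]
  · intro k h
    rcases Nat.even_or_odd' k with ⟨l, rfl | rfl⟩
    · rw [heven] at h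
      have h2 := SemidirectProduct.inl_injective h
      cases h2
    · refine absurd ?_ hne1
      rw [← hodd l, h, SemidirectProduct.right_inl]
  · rw [SemidirectProduct.card, nat_card, Nat.card_eq_fintype_card (α := Multiplicative (ZMod 2)),
      Fintype.card_multiplicative, ZMod.card]
    ring
end

section
/- A finite group G in which every abelian subgroup is cyclic and whose Sylow 2-subgroups are cyclic is metacyclic, hence solvable. -/
theorem mc_mem_zpowers {H : Type*} [Group H] [Finite H] [IsCyclic H] {p : ℕ} (hp : p.Prime)
    {z c : H} (hz : orderOf z = p) (hc : c ^ p = 1) : c ∈ Subgroup.zpowers z := by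
  classical
  have := Fintype.ofFinite H
  have h1 := IsCyclic.card_pow_eq_one_le (α := H) hp.pos
  have hsub : (Subgroup.zpowers z : Set H).toFinset ⊆ Finset.univ.filter (fun a : H => a ^ p = 1) := by
    intro x hx
    simp only [Set.mem_toFinset, SetLike.mem_coe] at hx
    obtain ⟨k, rfl⟩ := Subgroup.mem_zpowers_iff.mp hx
    simp only [Finset.mem_filter, Finset.mem_univ, true_and]
    rw [← zpow_natCast, ← zpow_mul, mul_comm, zpow_mul, zpow_natCast, ← hz, pow_orderOf_eq_one,
      one_zpow]
  have hcard : (Subgroup.zpowers z : Set H).toFinset.card = p := by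
    rw [← hz, ← Nat.card_zpowers, ← Set.ncard_eq_toFinset_card']
    rfl
  have heq := Finset.eq_of_subset_of_card_le hsub (by rw [hcard]; exact h1)
  have : c ∈ Finset.univ.filter (fun a : H => a ^ p = 1) := by simp [hc]
  rw [← heq] at this
  simpa using this

theorem mc_conj_pow {P : Type*} [Group P] {a b : P} {r : ℤ} (h : b * a = a ^ r * b) (m : ℤ) :
    b * a ^ m = a ^ (r * m) * b := by
  have h2 : b * a * b⁻¹ = a ^ r := by rw [h]; group
  have h3 : b * a ^ m * b⁻¹ = a ^ (r * m) := by rw [← conj_zpow, h2, zpow_mul]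
  rw [← h3]; group

theorem mc_pow_conj {P : Type*} [Group P] {a b : P} {r : ℤ} (h : b * a = a ^ r * b) (k : ℕ) :
    b ^ k * a = a ^ (r ^ k) * b ^ k := by
  induction k with
  | zero => simp
  | succ k ih =>
    rw [pow_succ', mul_assoc, ih, ← mul_assoc, mc_conj_pow h, mul_assoc, ← pow_succ']

theorem mc_mul_pow {P : Type*} [Group P] {a b : P} {r : ℤ} (h : b * a = a ^ r * b) (j : ℤ) (k : ℕ) :
    (a ^ j * b) ^ k = a ^ (j * ∑ i ∈ Finset.range k, r ^ i) * b ^ k := by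
  induction k with
  | zero => simp
  | succ k ih =>
    rw [pow_succ', ih, geom_sum_succ, mul_assoc, ← mul_assoc b, mc_conj_pow h, mul_assoc,
      ← pow_succ', ← mul_assoc, ← zpow_add]
    congr 2
    ring

theorem mc_pgroup {p : ℕ} (hp : p.Prime) (hp2 : p ≠ 2) (n : ℕ) :
    ∀ (P : Type*) [Group P] [Finite P], Nat.card P = p ^ n →
    (∀ H : Subgroup P, (∀ x y : H, x * y = y * x) → IsCyclic H) → IsCyclic P := by
  have : Fact p.Prime := ⟨hp⟩
  have hpZ : Prime (p : ℤ) := Nat.prime_iff_prime_int.mp hp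
  induction n with
  | zero =>
    intro P _ _ hc _
    have : Subsingleton P := (Nat.card_eq_one_iff_unique.mp (by simpa using hc)).1
    infer_instance
  | succ n ih =>
    intro P _ _ hc hab
    rcases Nat.eq_zero_or_pos n with hn0 | hn0
    · subst hn0
      exact isCyclic_of_prime_card (p := p) (by simpa using hc)
    by_contra hncyc
    obtain ⟨M, hM⟩ := Sylow.exists_subgroup_card_pow_prime (G := P) p (n := n)
      (by rw [hc]; exact pow_dvd_pow _ (Nat.le_succ n))
    have hMidx : M.index = p := by
      have h := M.card_mul_index
      rw [hM, hc, pow_succ] at h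
      exact Nat.eq_of_mul_eq_mul_left (pow_pos hp.pos n) h
    have hMn : M.Normal := by
      apply Subgroup.normal_of_index_eq_minFac_card
      rw [hMidx, hc, Nat.Prime.pow_minFac hp (Nat.succ_ne_zero n)]
    have hMcyc : IsCyclic M := by
      refine ih M hM ?_
      intro H hH
      have h1 : IsCyclic (H.map M.subtype) := by
        apply hab
        rintro ⟨x, x', hx', rfl⟩ ⟨y, y', hy', rfl⟩
        have := hH ⟨x', hx'⟩ ⟨y', hy'⟩
        simp only [Subtype.ext_iff, Subgroup.coe_mul] at this
        simpa [Subtype.ext_iff] using this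
      exact (H.equivMapOfInjective M.subtype M.subtype_injective).isCyclic.mpr h1
    obtain ⟨a, ha⟩ : ∃ a : P, Subgroup.zpowers a = M := by
      exact (Subgroup.isCyclic_iff_exists_zpowers_eq_top M).mp hMcyc
    have hoa : orderOf a = p ^ n := by rw [← Nat.card_zpowers, ha, hM]
    have haM : a ∈ M := ha ▸ Subgroup.mem_zpowers a
    obtain ⟨b, hb⟩ : ∃ b : P, b ∉ M := by
      by_contra! hall
      have : M = ⊤ := by ext x; simp [hall x]
      rw [this, Subgroup.index_top] at hMidx
      exact hp.one_lt.ne hMidx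
    obtain ⟨r, hr⟩ : ∃ r : ℤ, a ^ r = b * a * b⁻¹ := by
      apply Subgroup.mem_zpowers_iff.mp
      rw [ha]; exact hMn.conj_mem a haM b
    have hba : b * a = a ^ r * b := by rw [hr]; group
    obtain ⟨s, hs⟩ : ∃ s : ℤ, a ^ s = b ^ p := by
      apply Subgroup.mem_zpowers_iff.mp
      rw [ha, ← hMidx]; exact M.pow_index_mem b
    -- r is 1 mod p
    have hr1 : (p : ℤ) ∣ r - 1 := by
      have h1 := mc_pow_conj hba p
      rw [← hs, ← zpow_add_one, ← zpow_add] at h1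
      have h2 : a ^ (r ^ p - 1) = 1 := by
        have : a ^ (r ^ p - 1) = a ^ (r ^ p + s) * (a ^ (s + 1))⁻¹ := by
          rw [← zpow_neg, ← zpow_add]; congr 1; ring
        rw [this, h1, mul_inv_cancel]
      have h3 := orderOf_dvd_iff_zpow_eq_one.mpr h2
      rw [hoa] at h3
      have h4 : (p : ℤ) ∣ r ^ p - 1 :=
        (Int.natCast_dvd_natCast.mpr (dvd_pow_self p hn0.ne')).trans h3
      rw [← ZMod.intCast_zmod_eq_zero_iff_dvd] at h4 ⊢
      push_cast at h4 ⊢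
      rwa [ZMod.pow_card] at h4
    -- p divides s
    have hps : (p : ℤ) ∣ s := by
      by_contra hnd
      have hcop : IsCoprime s ((p : ℤ) ^ n) :=
        ((hpZ.coprime_iff_not_dvd.mpr hnd).symm).pow_right
      obtain ⟨u, v, huv⟩ := hcop
      have hab' : a ∈ Subgroup.zpowers b := by
        have : a = (b ^ p) ^ u := by
          rw [← hs, ← zpow_mul]
          have hv : a ^ ((p : ℤ) ^ n * v) = 1 := by
            rw [zpow_mul]
            have : a ^ ((p : ℤ) ^ n) = 1 := by
              rw [← Nat.cast_pow, zpow_natCast, ← hoa, pow_orderOf_eq_one]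
            rw [this, one_zpow]
          calc a = a ^ (u * s + v * (p : ℤ) ^ n) := by rw [huv, zpow_one]
            _ = a ^ (s * u) * a ^ ((p : ℤ) ^ n * v) := by rw [← zpow_add]; congr 1; ring
            _ = _ := by rw [hv, mul_one]
        rw [this]
        exact Subgroup.zpow_mem _ (Subgroup.pow_mem _ (Subgroup.mem_zpowers b) _) _
      have hle : M ≤ Subgroup.zpowers b := by
        rw [← ha]; exact Subgroup.zpowers_le.mpr hab'
      have hidx := Subgroup.index_dvd_of_le hle
      rw [hMidx] at hidx
      rcases (Nat.dvd_prime hp).mp hidx with h | h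
      · rw [Subgroup.index_eq_one] at h
        exact hncyc (isCyclic_iff_exists_zpowers_eq_top.mpr ⟨b, h⟩)
      · have h5 := (Subgroup.zpowers b).card_mul_index
        have h6 := M.card_mul_index
        rw [h, ← h6, hMidx] at h5
        have h7 := Nat.eq_of_mul_eq_mul_right hp.pos h5
        have := Subgroup.eq_of_le_of_card_ge hle h7.le
        exact hb (this ▸ Subgroup.mem_zpowers b)
    obtain ⟨t, rfl⟩ := hps
    obtain ⟨w, hw⟩ := hr1
    have hrw : r = 1 + p * w := by linarith
    obtain ⟨k, hk⟩ : ∃ k : ℤ, ∑ i ∈ Finset.range p, r ^ i = p * (1 + p * k) := by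
      obtain ⟨k, hk⟩ := odd_sq_dvd_geom_sum₂_sub (R := ℤ) (a := 1) (b := w) (hp.odd_of_ne_two hp2)
      simp only [one_pow, mul_one] at hk
      refine ⟨k, ?_⟩
      rw [hrw]; linear_combination hk
    obtain ⟨u, v, huv⟩ : IsCoprime (1 + (p : ℤ) * k) ((p : ℤ) ^ n) := by
      apply IsCoprime.pow_right
      exact ⟨1, -k, by ring⟩
    have hap : a ^ ((p : ℤ) ^ n) = 1 := by
      rw [← Nat.cast_pow, zpow_natCast, ← hoa, pow_orderOf_eq_one]
    have hcp : (a ^ (-t * u) * b) ^ p = 1 := by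
      rw [mc_mul_pow hba, hk, ← hs, ← zpow_add]
      have : -t * u * (p * (1 + p * k)) + p * t = (p : ℤ) ^ n * (p * t * v) := by
        linear_combination (-(p : ℤ) * t) * huv
      rw [this, zpow_mul, hap, one_zpow]
    set c := a ^ (-t * u) * b with hcdef
    have hcM : c ∉ M := by
      intro h
      exact hb ((M.mul_mem_cancel_left (M.zpow_mem haM _)).mp h)
    set z := a ^ (p ^ (n - 1)) with hzdef
    have hzM : z ∈ M := M.pow_mem haM _
    have hpn : p ^ n = p ^ (n - 1) * p := by rw [← pow_succ]; congr 1; omega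
    have hzo : orderOf z = p := by
      rw [hzdef, orderOf_pow_of_dvd (pow_pos hp.pos _).ne' (by rw [hoa, hpn]; exact dvd_mul_right _ _),
        hoa, hpn, Nat.mul_div_cancel_left _ (pow_pos hp.pos _)]
    have hbz : b * z = z * b := by
      have h := mc_conj_pow hba ((p ^ (n - 1) : ℕ) : ℤ)
      rw [zpow_natCast, mul_comm r, zpow_mul, zpow_natCast] at h
      change b * z = z ^ r * b at h
      have : z ^ r = z := by
        rw [hrw, zpow_add, zpow_one, zpow_mul, zpow_natCast]
        have hzp : z ^ p = 1 := orderOf_dvd_iff_pow_eq_one.mp hzo.dvd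
        rw [hzp, one_zpow, mul_one]
      rwa [this] at h
    have haz : Commute (a ^ (-t * u)) z := (Commute.refl a).zpow_left _ |>.pow_right _
    have hcz : Commute c z := haz.mul_left hbz
    let K := Subgroup.closure ({c, z} : Set P)
    have hKc : IsMulCommutative K := by
      apply Subgroup.isMulCommutative_closure
      rintro x (rfl | rfl) y (rfl | rfl)
      · rfl
      · exact hcz
      · exact hcz.symm
      · rfl
    have hKcyc : IsCyclic K := hab K (fun x y => mul_comm' x y)
    have hcK : c ∈ K := Subgroup.subset_closure (by simp)
    have hzK : z ∈ K := Subgroup.subset_closure (by simp)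
    have := mc_mem_zpowers (H := K) hp (z := ⟨z, hzK⟩) (c := ⟨c, hcK⟩)
      (by rw [Subgroup.orderOf_mk, hzo]) (by ext; simpa using hcp)
    obtain ⟨e, he⟩ := Subgroup.mem_zpowers_iff.mp this
    have he' : z ^ e = c := by simpa [Subtype.ext_iff] using he
    exact hcM (he' ▸ M.zpow_mem hzM e)


/-- A finite group in which every abelian subgroup is cyclic and whose Sylow
`2`-subgroups are cyclic is metacyclic (it has a cyclic normal subgroup with cyclic
quotient --- expressed here as the kernel of a surjection onto a cyclic group),
hence solvable. -/
theorem metacyclic_of_abelian_subgroups_cyclic_and_sylow_two_cyclic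
    (G : Type*) [Group G] [Finite G]
    (habel : ∀ H : Subgroup G, (∀ x y : H, x * y = y * x) → IsCyclic H)
    (hsyl2 : ∀ P : Sylow 2 G, IsCyclic P) :
    (∃ (N : Subgroup G) (m : ℕ) (f : G →* Multiplicative (ZMod m)),
      IsCyclic N ∧ f.ker = N ∧ Function.Surjective f) ∧ IsSolvable G := by

  have hZ : IsZGroup G := by
    refine ⟨fun p hp P => ?_⟩
    by_cases hp2 : p = 2
    · subst hp2; exact hsyl2 P
    have : Fact p.Prime := ⟨hp⟩
    obtain ⟨n, hn⟩ := P.2.exists_card_eq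
    refine mc_pgroup hp hp2 n P hn ?_
    intro H hH
    have h1 : IsCyclic (H.map (P : Subgroup G).subtype) := by
      apply habel
      rintro ⟨x, x', hx', rfl⟩ ⟨y, y', hy', rfl⟩
      have := hH ⟨x', hx'⟩ ⟨y', hy'⟩
      simp only [Subtype.ext_iff, Subgroup.coe_mul] at this
      simpa [Subtype.ext_iff] using this
    exact (H.equivMapOfInjective (P : Subgroup G).subtype
      (P : Subgroup G).subtype_injective).isCyclic.mpr h1
  refine ⟨?_, (inferInstance : Group.IsSolvable G)⟩
  have hA : IsCyclic (Abelianization G) := inferInstance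
  let e := zmodCyclicMulEquiv hA
  refine ⟨commutator G, Nat.card (Abelianization G),
    e.symm.toMonoidHom.comp Abelianization.of, IsZGroup.isCyclic_commutator G, ?_, ?_⟩
  · rw [← Abelianization.ker_of]
    ext x
    simp [MonoidHom.mem_ker]
  · exact e.symm.surjective.comp (QuotientGroup.mk_surjective)
end
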